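/- arXiv:2401.11904 — 2 statements merged into one kernel-verified Lean document; each statement's English description precedes it below -/
import Mathlib

section
/- (Segment construction axiom A4 holds in the real Cartesian model.) For all points a, b, c, d in ℝ^n, there exists a point e such that Bet a b e and Cong b e c d. -/
/-!
If `a ≠ b`, extend the segment `a b` beyond `b` by the factor `t = |cd| / |ab|`: the point
`e = b + t (b - a)` satisfies `b - a = (1 + t)⁻¹ (e - a)` and `|be| = t |ab| = |cd|`.
If `a = b`, every `e` satisfies the betweenness condition, and `e = b + (d - c)` is congruent.
-/

variable {n : ℕ}

def Bet (a b c : Fin n → ℝ) : Prop :=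
  ∃ k : ℝ, 0 ≤ k ∧ k ≤ 1 ∧ b - a = k • (c - a)

def Cong (a b c d : Fin n → ℝ) : Prop :=
  ∑ i, (b i - a i) ^ 2 = ∑ i, (d i - c i) ^ 2

theorem segment_construction (a b c d : Fin n → ℝ) :
    ∃ e : Fin n → ℝ, Bet a b e ∧ Cong b e c d := by
  by_cases hab : a = b
  · subst hab
    exact ⟨a + (d - c), ⟨0, le_rfl, zero_le_one, by simp⟩, by simp [Cong]⟩
  · have hpos : 0 < ∑ i, (b i - a i) ^ 2 := by
      obtain ⟨j, hj⟩ := Function.ne_iff.mp hab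
      exact Finset.sum_pos' (fun i _ => sq_nonneg _)
        ⟨j, Finset.mem_univ j, sq_pos_iff.mpr (sub_ne_zero.mpr (Ne.symm hj))⟩
    obtain ⟨t, ht, hts⟩ : ∃ t : ℝ, 0 ≤ t ∧
        t ^ 2 = (∑ i, (d i - c i) ^ 2) / ∑ i, (b i - a i) ^ 2 :=
      ⟨_, Real.sqrt_nonneg _, Real.sq_sqrt (by positivity)⟩
    refine ⟨b + t • (b - a), ⟨(1 + t)⁻¹, by positivity, inv_le_one_of_one_le₀ (by linarith), ?_⟩, ?_⟩
    · have h : b + t • (b - a) - a = (1 + t) • (b - a) := by module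
      rw [h, inv_smul_smul₀ (by positivity)]
    · simp only [Cong, Pi.add_apply, Pi.smul_apply, Pi.sub_apply, smul_eq_mul,
        add_sub_cancel_left, mul_pow, ← Finset.mul_sum]
      rw [hts, div_mul_cancel₀ _ hpos.ne']
end

section
/- (Failure of the upper n-dimensional axiom A9⁽ⁿ⁾ in the standard n-dimensional real model for n ≥ 4.) Fix a natural number n ≥ 4. For 1 ≤ i ≤ n, let P_i ∈ ℝ^n be the point with first coordinate cos(2iπ/n), second coordinate sin(2iπ/n), and all other coordinates 0. Let a = 0, let b be the standard basis vector with 1 in the third coordinate, and let c be the standard basis vector with 1 in the fourth coordinate. Then: the points P_1, …, P_n are pairwise distinct; a, b, c are pairwise distinct; for every i with 2 ≤ i ≤ n one has Cong a P_1 a P_i, Cong b P_1 b P_i, and Cong c P_1 c P_i; yet ¬(Bet a b c ∨ Bet b c a ∨ Bet c a b). -/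
/-!
The points `P i` are the vertices of a regular `n`-gon on the unit circle of the plane spanned by
the first two coordinates. Any `q` orthogonal to that plane has squared distance `1 + ‖q‖²` to
every point of the circle (Pythagoras, `sum_sq_circle_sub`), hence is equidistant from all the
vertices. For `4 ≤ n` this applies to the origin and to the third and fourth basis vectors,
which are not collinear: each betweenness relation is refuted by reading it in the third and
fourth coordinates.
-/

variable {n : ℕ}

/-- Pythagoras: a point whose coordinates `u ≠ v` vanish has squared distance `1 + ∑ j, q j ^ 2`
to every point of the unit circle in the plane of the coordinates `u` and `v`. -/
lemma sum_sq_circle_sub {n : ℕ} (u v : Fin n) (huv : u ≠ v) (q : Fin n → ℝ)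
    (hu : q u = 0) (hv : q v = 0) (t : ℝ) :
    ∑ j, ((if j = u then Real.cos t else if j = v then Real.sin t else 0) - q j) ^ 2
      = 1 + ∑ j, q j ^ 2 := by
  have key : ∀ j, ((if j = u then Real.cos t else if j = v then Real.sin t else 0) - q j) ^ 2
      = (if j = u then Real.cos t ^ 2 else 0) + (if j = v then Real.sin t ^ 2 else 0)
        + q j ^ 2 := by
    intro j
    by_cases h1 : j = u
    · subst h1
      simp [huv, hu]
    · by_cases h2 : j = v
      · subst h2
        simp [h1, hv]
      · simp [h1, h2]
  simp [key, Finset.sum_add_distrib]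

/-- The angles `2iπ/n`, `1 ≤ i ≤ n`, are determined by their cosine and sine: two angles with the
same cosine and sine differ by a multiple of `2π`, and here `|i - j| < n`. -/
lemma vertex_index_eq {n i j : ℕ} (hi : 1 ≤ i) (hin : i ≤ n) (hj : 1 ≤ j) (hjn : j ≤ n)
    (hcos : Real.cos (2 * i * Real.pi / n) = Real.cos (2 * j * Real.pi / n))
    (hsin : Real.sin (2 * i * Real.pi / n) = Real.sin (2 * j * Real.pi / n)) : i = j := by
  obtain ⟨k, hk⟩ := Real.Angle.angle_eq_iff_two_pi_dvd_sub.1 (Real.Angle.cos_sin_inj hcos hsin)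
  have hn : (n : ℝ) ≠ 0 := by
    have : n ≠ 0 := by omega
    exact_mod_cast this
  have hpi := Real.pi_ne_zero
  have h : (i : ℝ) - j = n * k := by
    field_simp at hk
    linarith
  have hz : (i : ℤ) - j = n * k := by exact_mod_cast h
  have hk1 : k < 1 := by
    by_contra! hc
    nlinarith
  have hk2 : -1 < k := by
    by_contra! hc
    nlinarith
  have hk0 : k = 0 := by omega
  subst hk0
  omega

theorem upper_dim_axiom_fails (hn : 4 ≤ n)
    (P : ℕ → (Fin n → ℝ))
    (hP : ∀ i : ℕ, P i = fun j : Fin n =>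
      if j = (⟨0, by omega⟩ : Fin n) then Real.cos (2 * i * Real.pi / n)
      else if j = (⟨1, by omega⟩ : Fin n) then Real.sin (2 * i * Real.pi / n)
      else 0)
    (a b c : Fin n → ℝ)
    (ha : a = 0)
    (hb : b = fun j : Fin n => if j = (⟨2, by omega⟩ : Fin n) then 1 else 0)
    (hc : c = fun j : Fin n => if j = (⟨3, by omega⟩ : Fin n) then 1 else 0) :
    (∀ i j : ℕ, 1 ≤ i → i ≤ n → 1 ≤ j → j ≤ n → i ≠ j → P i ≠ P j) ∧
    (a ≠ b ∧ a ≠ c ∧ b ≠ c) ∧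
    (∀ i : ℕ, 2 ≤ i → i ≤ n →
      Cong a (P 1) a (P i) ∧ Cong b (P 1) b (P i) ∧ Cong c (P 1) c (P i)) ∧
    ¬ (Bet a b c ∨ Bet b c a ∨ Bet c a b) := by
  have h01 : (⟨0, by omega⟩ : Fin n) ≠ ⟨1, by omega⟩ := by simp
  have hb2 : b ⟨2, by omega⟩ = 1 := by simp [hb]
  have hb3 : b ⟨3, by omega⟩ = 0 := by simp [hb]
  have hc2 : c ⟨2, by omega⟩ = 0 := by simp [hc]
  have hc3 : c ⟨3, by omega⟩ = 1 := by simp [hc]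
  have equidistant : ∀ q : Fin n → ℝ, q ⟨0, by omega⟩ = 0 → q ⟨1, by omega⟩ = 0 →
      ∀ i : ℕ, Cong q (P 1) q (P i) := by
    intro q hq0 hq1 i
    unfold Cong
    rw [hP 1, hP i]
    exact (sum_sq_circle_sub _ _ h01 q hq0 hq1 _).trans
      (sum_sq_circle_sub _ _ h01 q hq0 hq1 _).symm
  refine ⟨?_, ⟨?_, ?_, ?_⟩, ?_, ?_⟩
  · intro i j hi hin hj hjn hij h
    rw [hP i, hP j] at h
    have hcos := congrFun h ⟨0, by omega⟩
    have hsin := congrFun h ⟨1, by omega⟩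
    simp only [if_true, if_neg h01.symm] at hcos hsin
    exact hij (vertex_index_eq hi hin hj hjn hcos hsin)
  · intro h
    rw [← h, ha] at hb2
    simp at hb2
  · intro h
    rw [← h, ha] at hc3
    simp at hc3
  · intro h
    rw [h, hc2] at hb2
    simp at hb2
  · intro i _ _
    exact ⟨equidistant a (by simp [ha]) (by simp [ha]) i,
      equidistant b (by simp [hb]) (by simp [hb]) i,
      equidistant c (by simp [hc]) (by simp [hc]) i⟩
  · rintro (⟨k, _, _, h⟩ | ⟨k, _, _, h⟩ | ⟨k, _, _, h⟩) <;>
    · have e2 := congrFun h ⟨2, by omega⟩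
      have e3 := congrFun h ⟨3, by omega⟩
      simp only [Pi.sub_apply, Pi.smul_apply, smul_eq_mul, hb2, hb3, hc2, hc3, ha,
        Pi.zero_apply] at e2 e3
      linarith
end
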